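/- Let G be a finitely generated group with an orientation preserving C^1 action on the circle and suppose there exists a G-invariant Borel probability measure on the circle. If every group homomorphism G → (ℝ,+) is trivial and every group homomorphism [G,G] → (ℝ,+) is trivial (i.e., H^1(G,ℝ) = H^1([G,G],ℝ) = 0), then the action of G factors through an action of a finite cyclic group; that is, the image of G in Diff^1_+(S^1) is a finite cyclic group. -/

import Mathlib

noncomputable section

open MeasureTheory

/-- The circle `S¹ = ℝ/ℤ`. -/
abbrev 𝕊 : Type := AddCircle (1 : ℝ)

/-- `F : ℝ → ℝ` is a lift of the circle bijection `f` witnessing that `f` is an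
orientation preserving homeomorphism of the circle: `F` is a strictly increasing
homeomorphism of `ℝ` (equivalently, continuous and strictly increasing) satisfying
`F (x + 1) = F x + 1`, and projecting to `f`. -/
def IsOPLift (f : Equiv.Perm 𝕊) (F : ℝ → ℝ) : Prop :=
  Continuous F ∧ StrictMono F ∧ (∀ x : ℝ, F (x + 1) = F x + 1) ∧
    ∀ x : ℝ, f (x : 𝕊) = (F x : 𝕊)

/-- `f` is an orientation preserving homeomorphism of the circle. -/
def IsOPHomeo (f : Equiv.Perm 𝕊) : Prop := ∃ F : ℝ → ℝ, IsOPLift f F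

/-- `F` is a lift witnessing that `f` is an orientation preserving `C¹` diffeomorphism
of the circle: an orientation preserving lift which is `C¹` with nowhere vanishing
derivative. -/
def IsC1Lift (f : Equiv.Perm 𝕊) (F : ℝ → ℝ) : Prop :=
  IsOPLift f F ∧ ContDiff ℝ 1 F ∧ ∀ x : ℝ, deriv F x ≠ 0

/-- `f` is an orientation preserving `C¹` diffeomorphism of the circle, i.e. an element
of `Diff¹₊(S¹)`. -/
def IsC1Diffeo (f : Equiv.Perm 𝕊) : Prop := ∃ F : ℝ → ℝ, IsC1Lift f F


open Filter Topology Asymptotics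

theorem thurston_aux {H : Type*} [Group H] [hfg : Group.FG H] (F : H → ℝ → ℝ)
    (hone : ∀ x, F 1 x = x) (hmul : ∀ g h x, F (g * h) x = F g (F h x))
    (hC : ∀ h, ContDiff ℝ 1 (F h)) (hmono : ∀ h, Monotone (F h))
    (hhom : ∀ φ : H →* Multiplicative ℝ, φ = 1) (p : ℝ) (hp : ∀ h, F h p = p)
    (hev : ∀ᶠ x in 𝓝[>] p, ∃ h, F h x ≠ x) : False := by
  classical
  have hd : ∀ h, HasDerivAt (F h) (deriv (F h) p) p := fun h =>
    ((hC h).differentiable one_ne_zero p).hasDerivAt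
  have hdmul : ∀ g h, deriv (F (g * h)) p = deriv (F g) p * deriv (F h) p := by
    intro g h
    have e : F (g * h) = F g ∘ F h := funext (hmul g h)
    rw [e]
    refine HasDerivAt.deriv (HasDerivAt.comp p ?_ (hd h))
    rw [hp h]; exact hd g
  have hdone : deriv (F 1) p = 1 := by
    have e : F 1 = id := funext hone
    rw [e]; simp
  have hdne : ∀ h, deriv (F h) p ≠ 0 := by
    intro h h0
    have := hdmul h h⁻¹
    rw [mul_inv_cancel, hdone, h0] at this
    simp at this
  have hd1 : ∀ h, deriv (F h) p = 1 := by
    intro h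
    let φ : H →* Multiplicative ℝ :=
      { toFun := fun h => Multiplicative.ofAdd (Real.log (deriv (F h) p))
        map_one' := by simp [hdone]
        map_mul' := fun g h => by
          rw [hdmul, Real.log_mul (hdne g) (hdne h), ofAdd_add] }
    have h1 : φ h = 1 := by rw [hhom φ]; rfl
    have h2 : Real.log (deriv (F h) p) = 0 := Multiplicative.ofAdd.injective h1
    have h3 : 0 ≤ deriv (F h) p := (hmono h).deriv_nonneg
    rcases Real.log_eq_zero.1 h2 with h | h | h <;> [exact absurd h (hdne _); exact h; linarith]
  let U : Ultrafilter ℝ := Ultrafilter.of (𝓝[>] p)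
  have hU : (U : Filter ℝ) ≤ 𝓝[>] p := Ultrafilter.of_le _
  have hUp : (U : Filter ℝ) ≤ 𝓝 p := hU.trans nhdsWithin_le_nhds
  let φ : H → ℝ → ℝ := fun h x => F h x - x
  have key : ∀ g h, (fun x => φ (g * h) x - φ g x - φ h x) =o[(U : Filter ℝ)] (φ h) := by
    intro g h
    have hs : HasStrictDerivAt (F g) 1 p := by
      have := (hC g).contDiffAt.hasStrictDerivAt (x := p) one_ne_zero
      rwa [hd1] at this
    have hs2 : HasStrictDerivAt (φ g) (1 - 1) p := hs.sub (hasStrictDerivAt_id p)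
    rw [sub_self] at hs2
    have ho := hs2.hasStrictFDerivAt.isLittleO
    have ht : Tendsto (fun x => (F h x, x)) (U : Filter ℝ) (𝓝 (p, p)) := by
      refine Tendsto.prodMk_nhds ?_ hUp
      have := (hC h).continuous.tendsto p
      rw [hp h] at this
      exact this.mono_left hUp
    have := ho.comp_tendsto ht
    refine (this.congr ?_ ?_)
    · intro x
      simp [φ, hmul]; ring
    · intro x; simp [φ]
  obtain ⟨S, hS⟩ := hfg.out
  let M : ℝ → ℝ := fun x => ∑ s ∈ S, |φ s x|
  have hO : ∀ h, (φ h) =O[(U : Filter ℝ)] M := by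
    intro h
    have hmem : h ∈ Subgroup.closure (S : Set H) := by rw [hS]; trivial
    induction hmem using Subgroup.closure_induction with
    | mem x hx =>
      refine IsBigO.of_bound 1 (Eventually.of_forall fun y => ?_)
      have h1 : |φ x y| ≤ M y :=
        Finset.single_le_sum (f := fun s => |φ s y|) (fun _ _ => abs_nonneg _) hx
      rw [one_mul, Real.norm_eq_abs, Real.norm_eq_abs]
      exact h1.trans (le_abs_self _)
    | one =>
      have : φ 1 = fun _ => 0 := by funext x; simp [φ, hone]
      rw [this]; exact isBigO_zero _ _
    | mul x y _ _ hx hy =>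
      have := (((key x y).isBigO.trans hy).add hx).add hy
      refine this.congr_left fun z => by ring
    | inv x _ hx =>
      have := (((key x⁻¹ x).isBigO.trans hx).add hx).neg_left
      refine this.congr_left fun z => ?_
      simp [φ, hone]
  have hMne : ∀ᶠ x in (U : Filter ℝ), M x ≠ 0 := by
    filter_upwards [hU hev] with x hx hM
    obtain ⟨h, hh⟩ := hx
    apply hh
    have hz : ∀ s ∈ S, F s x = x := by
      intro s hs
      have := (Finset.sum_eq_zero_iff_of_nonneg (fun s _ => abs_nonneg (φ s x))).1 hM s hs
      have := abs_eq_zero.1 this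
      simp only [φ] at this; linarith
    have hmem : h ∈ Subgroup.closure (S : Set H) := by rw [hS]; trivial
    induction hmem using Subgroup.closure_induction with
    | mem y hy => exact hz y hy
    | one => exact hone x
    | mul a b _ _ ha hb =>
      by_contra hc
      rw [hmul] at hc
      by_cases hb' : F b x = x
      · rw [hb'] at hc
        exact hc (by by_contra hc'; exact hc' (ha hc'))
      · exact hb' (hb hb')
    | inv a _ ha =>
      have e : F a x = x := by by_contra hc'; exact hc' (ha hc')
      have := hmul a⁻¹ a x
      rw [inv_mul_cancel, hone, e] at this
      exact this.symm
  have hlim : ∀ h, ∃ l : ℝ, Tendsto (fun x => φ h x / M x) (U : Filter ℝ) (𝓝 l) := by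
    intro h
    obtain ⟨c, hc⟩ := (hO h).bound
    have hmem : ∀ᶠ x in (U : Filter ℝ), φ h x / M x ∈ Set.Icc (-c) c := by
      filter_upwards [hc, hMne] with x hx hM
      rw [Set.mem_Icc, ← abs_le, abs_div, div_le_iff₀ (abs_pos.2 hM)]
      exact hx
    obtain ⟨l, -, hl⟩ := (isCompact_Icc (a := -c) (b := c)).ultrafilter_le_nhds
      (U.map fun x => φ h x / M x) (le_principal_iff.2 hmem)
    exact ⟨l, hl⟩
  choose L hL using hlim
  have hLmul : ∀ g h, L (g * h) = L g + L h := by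
    intro g h
    have h1 := ((key g h).trans_isBigO (hO h)).tendsto_div_nhds_zero
    have h2 := ((hL (g * h)).sub (hL g)).sub (hL h)
    have := tendsto_nhds_unique (h1.congr fun x => by ring) h2
    linarith
  let Φ : H →* Multiplicative ℝ := MonoidHom.mk' (fun h => Multiplicative.ofAdd (L h))
    (fun g h => by rw [hLmul, ofAdd_add])
  have hL0 : ∀ h, L h = 0 := by
    intro h
    have h1 : Φ h = 1 := by rw [hhom Φ]; rfl
    exact Multiplicative.ofAdd.injective h1
  have hsum : Tendsto (fun x => ∑ s ∈ S, |φ s x / M x|) (U : Filter ℝ) (𝓝 (∑ s ∈ S, |L s|)) :=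
    tendsto_finsetSum _ fun s _ => (hL s).abs
  have hsum1 : Tendsto (fun x => ∑ s ∈ S, |φ s x / M x|) (U : Filter ℝ) (𝓝 1) := by
    refine Tendsto.congr' ?_ tendsto_const_nhds
    filter_upwards [hMne] with x hx
    have hM0 : 0 ≤ M x := Finset.sum_nonneg fun _ _ => abs_nonneg _
    simp only [abs_div, ← Finset.sum_div]
    rw [abs_of_nonneg hM0]
    exact (div_self hx).symm
  have := tendsto_nhds_unique hsum hsum1
  simp [hL0] at this

theorem thurston_trivial {H : Type*} [Group H] [hfg : Group.FG H] (F : H → ℝ → ℝ)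
    (hone : ∀ x, F 1 x = x) (hmul : ∀ g h x, F (g * h) x = F g (F h x))
    (hC : ∀ h, ContDiff ℝ 1 (F h)) (hmono : ∀ h, Monotone (F h))
    (hhom : ∀ φ : H →* Multiplicative ℝ, φ = 1)
    (hp : ∀ x, ∃ p ≤ x, ∀ h, F h p = p) (h : H) (x : ℝ) : F h x = x := by
  by_contra hne
  let K : Set ℝ := {y | y ≤ x ∧ ∀ h, F h y = y}
  have hK : IsClosed K := by
    have : K = Set.Iic x ∩ ⋂ h, {y | F h y = y} := by ext; simp [K]
    rw [this]
    exact isClosed_Iic.inter (isClosed_iInter fun h =>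
      isClosed_eq (hC h).continuous continuous_id)
  have hne' : K.Nonempty := hp x
  have hbdd : BddAbove K := ⟨x, fun y hy => hy.1⟩
  have hq : sSup K ∈ K := hK.csSup_mem hne' hbdd
  have hlt : sSup K < x := lt_of_le_of_ne hq.1 (fun e => hne (by have := hq.2 h; rwa [e] at this))
  refine thurston_aux F hone hmul hC hmono hhom (sSup K) hq.2 ?_
  filter_upwards [Ioo_mem_nhdsGT hlt] with y hy
  by_contra hc
  push Not at hc
  exact absurd (le_csSup hbdd (show y ∈ K from ⟨hy.2.le, hc⟩)) (not_le.2 hy.1)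

theorem abelianization_finite (G : Type*) [Group G] [Group.FG G]
    (h1 : ∀ φ : G →* Multiplicative ℝ, φ = 1) : Finite (G ⧸ commutator G) := by
  have : Group.FG (Abelianization G) := QuotientGroup.fg (commutator G)
  have : AddGroup.FG (Additive (Abelianization G)) := inferInstance
  obtain ⟨n, ι, fι, p, hp, e, ⟨f⟩⟩ :=
    AddCommGroup.equiv_free_prod_directSum_zmod (Additive (Abelianization G))
  rcases n with - | n
  · have : ∀ i, NeZero (p i ^ e i) := fun i => ⟨pow_ne_zero _ (hp i).ne_zero⟩
    have : Finite (DirectSum ι fun i : ι => ZMod (p i ^ e i)) := by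
      classical
      exact Finite.of_equiv _ DFinsupp.equivFunOnFintype.symm
    exact (Finite.of_equiv _ f.toEquiv.symm : Finite (Additive (Abelianization G)))
  · exfalso
    let ψ : Additive (Abelianization G) →+ ℝ :=
      (Int.castAddHom ℝ).comp ((Finsupp.applyAddHom (0 : Fin (n+1))).comp
        ((AddMonoidHom.fst _ _).comp f.toAddMonoidHom))
    let φ : G →* Multiplicative ℝ := (AddMonoidHom.toMultiplicativeRight ψ).comp Abelianization.of
    obtain ⟨a, ha⟩ := f.surjective (Finsupp.single 0 1, 0)
    obtain ⟨g, hg⟩ := QuotientGroup.mk_surjective (s := commutator G) a.toMul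
    have h2 : φ g = 1 := by rw [h1 φ]; rfl
    have h3 : ψ a = 0 := by
      have : φ g = Multiplicative.ofAdd (ψ (Additive.ofMul (QuotientGroup.mk g))) := rfl
      rw [hg] at this
      rw [h2] at this
      exact (Multiplicative.ofAdd.injective this).symm
    simp [ψ, ha] at h3

theorem IsOPLift.add_int {f : Equiv.Perm 𝕊} {F : ℝ → ℝ} (h : IsOPLift f F) (n : ℤ) :
    IsOPLift f (fun x => F x + n) := by
  obtain ⟨hc, hm, hp, hl⟩ := h
  refine ⟨hc.add continuous_const, fun a b hab => by simpa using hm hab, fun x => ?_, fun x => ?_⟩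
  · simp only [hp]; ring
  · rw [hl]
    have : ((n : ℝ) : 𝕊) = 0 := by
      rw [AddCircle.coe_eq_zero_iff]; exact ⟨n, by simp⟩
    rw [AddCircle.coe_add, this, add_zero]

theorem IsOPLift.unique {f : Equiv.Perm 𝕊} {F F' : ℝ → ℝ} (h : IsOPLift f F)
    (h' : IsOPLift f F') (q : ℝ) (hq : F q = F' q) : F = F' := by
  refine (AddCircle.isCoveringMap_coe (1 : ℝ)).eq_of_comp_eq h.1 h'.1 ?_ q hq
  funext x
  simp only [Function.comp]
  rw [← h.2.2.2, ← h'.2.2.2]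

theorem IsOPLift.exists_int {f : Equiv.Perm 𝕊} {F F' : ℝ → ℝ} (h : IsOPLift f F)
    (h' : IsOPLift f F') : ∃ n : ℤ, ∀ x, F' x = F x + n := by
  have h0 : ((F' 0 - F 0 : ℝ) : 𝕊) = 0 := by
    rw [AddCircle.coe_sub, ← h.2.2.2, ← h'.2.2.2, sub_self]
  obtain ⟨n, hn⟩ := (AddCircle.coe_eq_zero_iff _).1 h0
  refine ⟨n, fun x => ?_⟩
  have hn' : (n : ℝ) = F' 0 - F 0 := by simpa using hn
  exact congrFun (h'.unique (h.add_int n) 0 (by simp only [hn']; ring)) x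

theorem IsOPLift.comp {f g : Equiv.Perm 𝕊} {F K : ℝ → ℝ} (h : IsOPLift f F)
    (h' : IsOPLift g K) : IsOPLift (f * g) (fun x => F (K x)) := by
  refine ⟨h.1.comp h'.1, h.2.1.comp h'.2.1, fun x => ?_, fun x => ?_⟩
  · simp only [h'.2.2.1, h.2.2.1]
  · rw [Equiv.Perm.mul_apply, h'.2.2.2, h.2.2.2]

theorem isOPLift_one : IsOPLift 1 (fun x => x) :=
  ⟨continuous_id, strictMono_id, fun _ => rfl, fun _ => rfl⟩

theorem IsOPLift.continuous {f : Equiv.Perm 𝕊} {F : ℝ → ℝ} (h : IsOPLift f F) :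
    Continuous f := by
  have hq : IsQuotientMap ((↑) : ℝ → 𝕊) := isQuotientMap_quotient_mk'
  rw [hq.continuous_iff]
  have : (f : 𝕊 → 𝕊) ∘ ((↑) : ℝ → 𝕊) = fun x => ((F x : ℝ) : 𝕊) := funext h.2.2.2
  rw [this]
  exact (AddCircle.continuous_mk' 1).comp h.1

/-- the displacement function on the circle -/
theorem IsOPLift.exists_disp {f : Equiv.Perm 𝕊} {F : ℝ → ℝ} (h : IsOPLift f F) :
    ∃ D : 𝕊 → ℝ, Continuous D ∧ ∀ x : ℝ, D x = F x - x := by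
  have hper : Function.Periodic (fun x => F x - x) 1 := fun x => by
    simp only [h.2.2.1]; ring
  refine ⟨hper.lift, ?_, fun x => rfl⟩
  have hq : IsQuotientMap ((↑) : ℝ → 𝕊) := isQuotientMap_quotient_mk'
  rw [hq.continuous_iff]
  exact h.1.sub continuous_id

theorem cont_integrable (μ : Measure 𝕊) [IsProbabilityMeasure μ] {D : 𝕊 → ℝ}
    (hD : Continuous D) : Integrable D μ :=
  hD.integrable_of_hasCompactSupport (HasCompactSupport.of_compactSpace D)

theorem exists_fixed_of_integral (μ : Measure 𝕊) [IsProbabilityMeasure μ] {D : 𝕊 → ℝ}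
    (hD : Continuous D) (h0 : ∫ z, D z ∂μ = 0) : ∃ x : ℝ, D (x : 𝕊) = 0 := by
  obtain ⟨a, ha⟩ := exists_le_integral (cont_integrable μ hD)
  obtain ⟨b, hb⟩ := exists_integral_le (cont_integrable μ hD)
  rw [h0] at ha hb
  obtain ⟨a, rfl⟩ := QuotientAddGroup.mk_surjective a
  obtain ⟨b, rfl⟩ := QuotientAddGroup.mk_surjective b
  have hc : Continuous (fun x : ℝ => D (x : 𝕊)) := hD.comp (AddCircle.continuous_mk' 1)
  exact mem_range_of_exists_le_of_exists_ge hc ⟨a, ha⟩ ⟨b, hb⟩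

theorem ae_fixed (μ : Measure 𝕊) [IsProbabilityMeasure μ] {f : Equiv.Perm 𝕊} {F : ℝ → ℝ}
    (h : IsOPLift f F) (hinv : Measure.map f μ = μ) (q : ℝ) (hq : F q = q) :
    ∀ᵐ z ∂μ, f z = z := by
  have : Fact ((0 : ℝ) < 1) := ⟨one_pos⟩
  have hfm : Measurable f := h.continuous.measurable
  have hmp : MeasurePreserving f μ μ := ⟨hfm, hinv⟩
  let s : 𝕊 → ℝ := fun z => (AddCircle.measurableEquivIco 1 q z : ℝ)
  have hsm : Measurable s :=
    measurable_subtype_coe.comp (AddCircle.measurableEquivIco 1 q).measurable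
  have hsI : ∀ z, s z ∈ Set.Ico q (q + 1) := fun z => (AddCircle.measurableEquivIco 1 q z).2
  have hsc : ∀ z, ((s z : ℝ) : 𝕊) = z := fun z => (AddCircle.equivIco 1 q).symm_apply_apply z
  have hsu : ∀ x ∈ Set.Ico q (q + 1), s (x : 𝕊) = x := fun x hx => by
    have := (AddCircle.equivIco 1 q).apply_symm_apply ⟨x, hx⟩
    exact congrArg Subtype.val this
  have hsf : ∀ z, s (f z) = F (s z) := by
    intro z
    have h1 : f z = ((F (s z) : ℝ) : 𝕊) := by rw [← h.2.2.2, hsc]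
    rw [h1]
    apply hsu
    constructor
    · have := h.2.1.monotone (hsI z).1; rwa [hq] at this
    · have := h.2.1 (hsI z).2; rwa [h.2.2.1, hq] at this
  have hsi : Integrable s μ := by
    refine Integrable.of_bound hsm.aestronglyMeasurable (|q| + 1) (Eventually.of_forall fun z => ?_)
    have := hsI z
    rw [Real.norm_eq_abs, abs_le]
    constructor
    · linarith [neg_abs_le q, this.1]
    · linarith [le_abs_self q, this.2]
  have hsfi : Integrable (fun z => s (f z)) μ := hmp.integrable_comp_of_integrable hsi
  have hmeas : Measurable (fun z => s (f z)) := hsm.comp hfm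
  have gen : ∀ A : Set 𝕊, MeasurableSet A → f ⁻¹' A = A →
      ∫ z in A, (s (f z) - s z) ∂μ = 0 := by
    intro A hA hfA
    rw [integral_sub hsfi.integrableOn hsi.integrableOn, sub_eq_zero]
    have h1 := setIntegral_map (μ := μ) (g := f) (f := s) hA
      (by rw [hinv]; exact hsm.aestronglyMeasurable) hfm.aemeasurable
    rw [hinv, hfA] at h1
    exact h1.symm
  have h1 : μ {z | s z < s (f z)} = 0 := by
    have hA : MeasurableSet {z | s z < s (f z)} := measurableSet_lt hsm hmeas
    have h2 := gen _ hA (by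
      ext z
      simp only [Set.mem_preimage, Set.mem_ofPred_eq]
      rw [hsf (f z), hsf z]
      exact h.2.1.lt_iff_lt)
    by_contra hne
    have := (setIntegral_pos_iff_support_of_nonneg_ae (μ := μ) (s := {z | s z < s (f z)})
      (f := fun z => s (f z) - s z)
      ((ae_restrict_iff' hA).2 (Eventually.of_forall fun z hz => by
        simp only [Set.mem_ofPred_eq] at hz; simp only [Pi.zero_apply]; linarith))
      (hsfi.sub hsi).integrableOn).2 (by
        rw [Set.inter_eq_self_of_subset_right]
        · exact pos_iff_ne_zero.2 hne
        · intro z hz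
          simp only [Set.mem_ofPred_eq] at hz
          simp only [Function.mem_support]; linarith)
    linarith
  have h1' : μ {z | s (f z) < s z} = 0 := by
    have hA : MeasurableSet {z | s (f z) < s z} := measurableSet_lt hmeas hsm
    have h2 := gen _ hA (by
      ext z
      simp only [Set.mem_preimage, Set.mem_ofPred_eq]
      rw [hsf (f z), hsf z]
      exact h.2.1.lt_iff_lt)
    by_contra hne
    have := (setIntegral_pos_iff_support_of_nonneg_ae (μ := μ) (s := {z | s (f z) < s z})
      (f := fun z => -(s (f z) - s z))
      ((ae_restrict_iff' hA).2 (Eventually.of_forall fun z hz => by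
        simp only [Set.mem_ofPred_eq] at hz; simp only [Pi.zero_apply]; linarith))
      (hsfi.sub hsi).neg.integrableOn).2 (by
        rw [Set.inter_eq_self_of_subset_right]
        · exact pos_iff_ne_zero.2 hne
        · intro z hz
          simp only [Set.mem_ofPred_eq] at hz
          simp only [Function.mem_support]; linarith)
    rw [integral_neg, h2] at this
    linarith
  have a1 : ∀ᵐ z ∂μ, ¬ s z < s (f z) := by rw [ae_iff]; simpa using h1
  have a2 : ∀ᵐ z ∂μ, ¬ s (f z) < s z := by rw [ae_iff]; simpa using h1'
  filter_upwards [a1, a2] with z hz1 hz2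
  have e : s (f z) = s z := le_antisymm (not_lt.1 hz1) (not_lt.1 hz2)
  have e2 := hsc (f z)
  rw [e, hsc] at e2
  exact e2.symm

/-- Let `G` be a finitely generated group with an orientation preserving
`C¹` action on the circle admitting an invariant Borel probability measure.  If every
group homomorphism `G → (ℝ, +)` is trivial and every group homomorphism
`[G, G] → (ℝ, +)` is trivial, then the action factors through a finite cyclic group:
the image of `G` in `Diff¹₊(S¹)` is a finite cyclic group. -/
theorem invariant_measure_action_factors_finite_cyclic
    (G : Type*) [Group G] [Group.FG G]
    (ρ : G →* Equiv.Perm 𝕊) (hρ : ∀ g : G, IsC1Diffeo (ρ g))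
    (μ : Measure 𝕊) [IsProbabilityMeasure μ]
    (hinv : ∀ g : G, Measure.map (ρ g) μ = μ)
    (h1 : ∀ φ : G →* Multiplicative ℝ, φ = 1)
    (h2 : ∀ φ : ↥(commutator G) →* Multiplicative ℝ, φ = 1) :
    Finite ρ.range ∧ IsCyclic ρ.range := by
  classical
  choose F hF using hρ
  have hOP : ∀ g, IsOPLift (ρ g) (F g) := fun g => (hF g).1
  choose D hDc hD using fun g => (hOP g).exists_disp
  let t : G → ℝ := fun g => ∫ z, D g z ∂μ
  have ht : ∀ g h, ((t (g * h) : ℝ) : 𝕊) = ((t g : ℝ) : 𝕊) + ((t h : ℝ) : 𝕊) := by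
    intro g h
    have hl : IsOPLift (ρ (g * h)) (fun x => F g (F h x)) := by
      rw [map_mul]; exact (hOP g).comp (hOP h)
    obtain ⟨n, hn⟩ := hl.exists_int (hOP (g * h))
    have e : ∀ z, D (g * h) z = D g (ρ h z) + D h z + n := by
      intro z
      obtain ⟨x, rfl⟩ := QuotientAddGroup.mk_surjective z
      change D (g * h) (x : 𝕊) = D g (ρ h (x : 𝕊)) + D h (x : 𝕊) + n
      rw [(hOP h).2.2.2, hD, hD, hD, hn]
      ring
    have hm : Measurable (ρ h) := (hOP h).continuous.measurable
    have e1 : ∫ z, D g (ρ h z) ∂μ = t g := by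
      have := integral_map (μ := μ) (φ := ρ h) (f := D g) hm.aemeasurable
        ((hDc g).measurable.aestronglyMeasurable)
      rw [hinv] at this
      exact this.symm
    have e2 : t (g * h) = t g + t h + n := by
      have i1 : Integrable (fun z => D g (ρ h z)) μ :=
        cont_integrable μ ((hDc g).comp (hOP h).continuous)
      have i2 := cont_integrable μ (hDc h)
      have i3 : Integrable (fun z => D g (ρ h z) + D h z) μ := i1.add i2
      simp only [t, e]
      rw [integral_add i3 (integrable_const _), integral_add i1 i2, e1]
      simp [t]
    have : ((n : ℝ) : 𝕊) = 0 := by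
      rw [AddCircle.coe_eq_zero_iff]; exact ⟨n, by simp⟩
    rw [e2, AddCircle.coe_add, AddCircle.coe_add, this, add_zero]
  let τ : G →* Multiplicative 𝕊 := MonoidHom.mk' (fun g => Multiplicative.ofAdd ((t g : ℝ) : 𝕊))
    (fun g h => by rw [ht, ofAdd_add])
  -- elements of the kernel of the rotation number have a lift with a fixed point
  have hker : ∀ g, τ g = 1 → ∃ q : ℝ, ∃ K, IsOPLift (ρ g) K ∧ K q = q := by
    intro g hg
    have h0 : ((t g : ℝ) : 𝕊) = 0 := Multiplicative.ofAdd.injective hg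
    obtain ⟨n, hn⟩ := (AddCircle.coe_eq_zero_iff _).1 h0
    have hn' : (n : ℝ) = t g := by simpa using hn
    have hi : ∫ z, (D g z - n) ∂μ = 0 := by
      rw [integral_sub (cont_integrable μ (hDc g)) (integrable_const _)]
      simp [hn', t]
    obtain ⟨q, hq⟩ := exists_fixed_of_integral μ ((hDc g).sub continuous_const) hi
    change D g (q : 𝕊) - n = 0 at hq
    rw [hD] at hq
    refine ⟨q, _, (hOP g).add_int (-n), ?_⟩
    push_cast
    linarith
  have hcomm : commutator G ≤ τ.ker := Abelianization.commutator_subset_ker τ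
  have hfin : Finite (G ⧸ commutator G) := abelianization_finite G h1
  have hFI : (commutator G).FiniteIndex := Subgroup.finiteIndex_of_finite_quotient
  have hFG : Group.FG (commutator G) := inferInstance
  -- a global fixed point of the commutator subgroup
  have hfix : ∃ p : ℝ, ∀ g ∈ commutator G, ρ g (p : 𝕊) = (p : 𝕊) := by
    obtain ⟨S, hS⟩ := hFG.out
    have hae : ∀ᵐ z ∂μ, ∀ s ∈ S, ρ (s : G) z = z := by
      rw [Filter.eventually_all_finset]
      intro s _
      obtain ⟨q, K, hK, hq⟩ := hker s (hcomm s.2)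
      exact ae_fixed μ hK (hinv s) q hq
    obtain ⟨z, hz⟩ := hae.exists
    obtain ⟨p, rfl⟩ := QuotientAddGroup.mk_surjective z
    refine ⟨p, fun g hg => ?_⟩
    have hle : Subgroup.closure (S : Set (commutator G)) ≤
        (MulAction.stabilizer (Equiv.Perm 𝕊) (p : 𝕊)).comap (ρ.comp (commutator G).subtype) := by
      rw [Subgroup.closure_le]
      intro s hs
      exact hz s hs
    have : (⟨g, hg⟩ : commutator G) ∈ Subgroup.closure (S : Set (commutator G)) := by
      rw [hS]; trivial
    exact hle this
  obtain ⟨p, hp⟩ := hfix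
  have hlift : ∀ g : commutator G, ∃ K, IsOPLift (ρ g) K ∧ ContDiff ℝ 1 K ∧ K p = p := by
    intro g
    have h0 : ((p - F g p : ℝ) : 𝕊) = 0 := by
      rw [AddCircle.coe_sub, ← (hOP g).2.2.2, hp g g.2, sub_self]
    obtain ⟨n, hn⟩ := (AddCircle.coe_eq_zero_iff _).1 h0
    have hn' : (n : ℝ) = p - F g p := by simpa using hn
    exact ⟨_, (hOP g).add_int n, (hF g).2.1.add contDiff_const, by simp only [hn']; ring⟩
  choose K hK hKC hKp using hlift
  have hKint : ∀ g, ∀ n : ℕ, K g (p - n) = p - n := by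
    intro g n
    induction n with
    | zero => simpa using hKp g
    | succ n ih =>
      have := (hK g).2.2.1 (p - (n + 1))
      rw [show p - ((n : ℝ) + 1) + 1 = p - n by ring, ih] at this
      push_cast
      linarith
  have htriv : ∀ g x, K g x = x := by
    refine thurston_trivial K ?_ ?_ hKC (fun g => (hK g).2.1.monotone) h2 ?_
    · have h1' : IsOPLift (ρ (1 : commutator G)) (fun x => x) := by
        simpa using isOPLift_one
      exact fun x => congrFun ((hK 1).unique h1' p (hKp 1)) x
    · intro g h x
      have h1' : IsOPLift (ρ (g * h : commutator G)) (fun x => K g (K h x)) := by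
        rw [Subgroup.coe_mul, map_mul]; exact (hK g).comp (hK h)
      exact congrFun ((hK (g * h)).unique h1' p (by rw [hKp, hKp, hKp])) x
    · intro x
      obtain ⟨n, hn⟩ := exists_nat_ge (p - x)
      exact ⟨p - n, by linarith, fun g => hKint g n⟩
  have eq_one : ∀ f : Equiv.Perm 𝕊, IsOPLift f (fun x => x) → f = 1 := by
    intro f hf
    ext z
    obtain ⟨x, rfl⟩ := QuotientAddGroup.mk_surjective z
    exact hf.2.2.2 x
  have hcker : commutator G ≤ ρ.ker := by
    intro g hg
    rw [MonoidHom.mem_ker]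
    apply eq_one
    have := hK ⟨g, hg⟩
    rwa [show K ⟨g, hg⟩ = fun x => x from funext (htriv _)] at this
  have hρfin : Finite ρ.range := by
    have : Finite (G ⧸ ρ.ker) := by
      have : ρ.ker.FiniteIndex := Subgroup.finiteIndex_of_le hcker
      infer_instance
    exact Finite.of_equiv _ (QuotientGroup.quotientKerEquivRange ρ).toEquiv
  have hτfin : Finite τ.range := by
    have : Finite (G ⧸ τ.ker) := by
      have : τ.ker.FiniteIndex := Subgroup.finiteIndex_of_le hcomm
      infer_instance
    exact Finite.of_equiv _ (QuotientGroup.quotientKerEquivRange τ).toEquiv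
  refine ⟨hρfin, ?_⟩
  have hkk : ∀ g, τ g = 1 → ρ g = 1 := by
    intro g hg
    obtain ⟨q, L, hL, hLq⟩ := hker g hg
    have hfo : IsOfFinOrder (⟨ρ g, g, rfl⟩ : ρ.range) := isOfFinOrder_of_finite _
    obtain ⟨m, hm, hm1⟩ := isOfFinOrder_iff_pow_eq_one.1 hfo
    have hm2 : (ρ g) ^ m = 1 := congrArg Subtype.val hm1
    have hit : ∀ k : ℕ, IsOPLift ((ρ g) ^ k) (L^[k]) := by
      intro k
      induction k with
      | zero => exact isOPLift_one
      | succ k ih =>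
        rw [pow_succ, Function.iterate_succ]
        exact ih.comp hL
    have hLm := hit m
    rw [hm2] at hLm
    have hfx : L^[m] q = q := Function.iterate_fixed hLq m
    have hLid : L^[m] = fun x => x := hLm.unique isOPLift_one q hfx
    apply eq_one
    have : L = fun x => x := by
      funext x
      have hc : Function.Commute L (id : ℝ → ℝ) := fun _ => rfl
      refine (hc.iterate_pos_eq_iff_map_eq hL.2.1.monotone strictMono_id hm).1 ?_
      rw [hLid]; simp
    rwa [this] at hL
  have : Fact ((0 : ℝ) < 1) := ⟨one_pos⟩
  let χ : τ.range →* ℂ :=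
    { toFun := fun a => ((AddCircle.toCircle (a : Multiplicative 𝕊).toAdd : Circle) : ℂ)
      map_one' := by simp
      map_mul' := fun a b => by simp [AddCircle.toCircle_add] }
  have hχ : Function.Injective χ := by
    intro a b hab
    have h3 := AddCircle.injective_toCircle one_ne_zero (Circle.coe_injective hab)
    exact Subtype.ext (Multiplicative.toAdd.injective h3)
  have hcyc : IsCyclic τ.range := isCyclic_of_injective_ringHom χ hχ
  obtain ⟨⟨_, g₀, rfl⟩, hg₀⟩ := hcyc.exists_generator
  refine ⟨⟨⟨ρ g₀, g₀, rfl⟩, ?_⟩⟩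
  rintro ⟨_, g, rfl⟩
  obtain ⟨k, hk⟩ := hg₀ ⟨τ g, g, rfl⟩
  have hk' : τ g₀ ^ k = τ g := congrArg Subtype.val hk
  refine ⟨k, Subtype.ext ?_⟩
  have h4 : ρ (g₀ ^ k * g⁻¹) = 1 := hkk _ (by rw [map_mul, map_zpow, map_inv, hk', mul_inv_cancel])
  rw [map_mul, map_zpow, map_inv, mul_inv_eq_one] at h4
  exact h4
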